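/- For every positive integer m and every x ∈ [0, π], one has sin(x) + sin(mx)/m ≥ 0. -/

import Mathlib

open Real

theorem abs_sin_nat_mul_le_aux (n : ℕ) (x : ℝ) :
    |Real.sin (n * x)| ≤ n * |Real.sin x| := by
  induction n with
  | zero => simp
  | succ k ih =>
    have e : ((k + 1 : ℕ) : ℝ) * x = k * x + x := by push_cast; ring
    rw [e, Real.sin_add]
    have h1 : |Real.sin (k * x) * Real.cos x| ≤ |Real.sin (k * x)| := by
      rw [abs_mul]
      exact mul_le_of_le_one_right (abs_nonneg _) (Real.abs_cos_le_one x)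
    have h2 : |Real.cos (k * x) * Real.sin x| ≤ |Real.sin x| := by
      rw [abs_mul]
      exact mul_le_of_le_one_left (abs_nonneg _) (Real.abs_cos_le_one _)
    have h3 := abs_add_le (Real.sin (k * x) * Real.cos x) (Real.cos (k * x) * Real.sin x)
    push_cast
    linarith

theorem sin_plus_sin_m (m : ℕ) (hm : 1 ≤ m)
    (x : ℝ) (hx : x ∈ Set.Icc 0 Real.pi) :
    0 ≤ Real.sin x + Real.sin (m * x) / m := by
  have hs : 0 ≤ Real.sin x := Real.sin_nonneg_of_mem_Icc hx
  have hm' : (0 : ℝ) < m := by exact_mod_cast hm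
  have h := abs_sin_nat_mul_le_aux m x
  rw [abs_of_nonneg hs] at h
  have h2 := neg_le_of_abs_le h
  have h3 : -Real.sin x ≤ Real.sin (m * x) / m := by
    rw [le_div_iff₀ hm']
    linarith
  linarith
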